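/- Let S_ω be the weight lattice of a simple complex Lie algebra g with Weyl group W, acted on (on the right) by W, and for a weight λ ∈ S_ω let Γ_λ = S_ω/(λ·Z[W]) be the quotient of S_ω by the sublattice generated by the W-orbit of λ. Then Γ_λ is the trivial group in each of the following cases (Bourbaki numbering of fundamental weights ϖ_i): (1) W = W(E_8) and λ = ϖ_8; (2) W = W(E_7) and λ = ϖ_7; (3) W = W(E_6) and λ = ϖ_1 or λ = ϖ_6; (4) W = W(D_n) with n odd and λ = ϖ_{n−1} or λ = ϖ_n; (5) W = W(A_n) and λ = ϖ_i with i coprime to n+1. -/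

import Mathlib

/-!
STATEMENT 17 (Lemma 5.4 / section 5.3).
The weight lattice `Sω` of a simple complex Lie algebra of rank `n` is identified with
`Fin n → ℤ` via the coordinates in the basis of fundamental weights `ϖ_i` (Bourbaki
numbering, shifted to be 0-indexed); `ϖ_i` is then `Pi.single i 1`.  With respect to
the Cartan matrix `C`, the simple reflection `s_i ∈ W` acts on the weight lattice by
`s_i(v) = v − ⟨v, α_i^∨⟩·α_i = v − v(i)·(C i)`, and the Weyl group `W` is generated by
the simple reflections; hence the `W`-orbit of a weight `lam` is the smallest set
containing `lam` and stable under all the `s_i`, and `Γ_λ = Sω/(lam·ℤ[W])` is trivial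
iff the subgroup generated by (any set containing) the orbit is all of `Sω`.
Claim: `Γ_λ` is trivial for
(1) `E₈` with `λ = ϖ₈`, (2) `E₇` with `λ = ϖ₇`, (3) `E₆` with `λ = ϖ₁` or `ϖ₆`,
(4) `D_n` (`n` odd) with `λ = ϖ_{n−1}` or `ϖ_n`, (5) `A_n` with `λ = ϖ_i`,
`gcd(i, n+1) = 1`.
-/

/-- The Cartan matrix of type `A_n` (simply-laced path graph), 0-indexed. -/
def cartanA (n : ℕ) : Fin n → Fin n → ℤ := fun i j =>
  if i = j then 2
  else if (i : ℕ) + 1 = (j : ℕ) ∨ (j : ℕ) + 1 = (i : ℕ) then -1 else 0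

/-- The Cartan matrix of type `D_n` in Bourbaki numbering (0-indexed): the nodes
`0, …, n−3` form a chain and the nodes `n−2`, `n−1` are both attached to `n−3`. -/
def cartanD (n : ℕ) : Fin n → Fin n → ℤ := fun i j =>
  if i = j then 2
  else if (max (i : ℕ) (j : ℕ) = min (i : ℕ) (j : ℕ) + 1 ∧ max (i : ℕ) (j : ℕ) ≤ n - 2)
        ∨ (min (i : ℕ) (j : ℕ) = n - 3 ∧ max (i : ℕ) (j : ℕ) = n - 1) then -1 else 0

/-- The adjacency list of the Dynkin diagrams `E₆ ⊂ E₇ ⊂ E₈` in Bourbaki numbering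
(0-indexed): node `1` (Bourbaki `α₂`) is attached to node `3` (Bourbaki `α₄`), and the
remaining nodes form the chain `0−2−3−4−5−6−7`. -/
def adjE : List (ℕ × ℕ) := [(0,2),(1,3),(2,3),(3,4),(4,5),(5,6),(6,7)]

/-- The Cartan matrix of type `E_n` (`n = 6,7,8`) in Bourbaki numbering, 0-indexed. -/
def cartanE (n : ℕ) : Fin n → Fin n → ℤ := fun i j =>
  if i = j then 2
  else if ((i : ℕ), (j : ℕ)) ∈ adjE ∨ ((j : ℕ), (i : ℕ)) ∈ adjE then -1 else 0

/-- The simple reflection `s_i` acting on the weight lattice `Fin n → ℤ` written in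
fundamental-weight coordinates: `s_i(v) = v − v(i)·α_i`, where `α_i = C i` is the
`i`-th simple root expressed in the basis of fundamental weights. -/
def simpleRefl {n : ℕ} (C : Fin n → Fin n → ℤ) (i : Fin n) (v : Fin n → ℤ) :
    Fin n → ℤ :=
  v - v i • C i

/-- The `k`-th unit vector, indexed from 1 by naturals (zero outside the range). -/
def unitE (n k : ℕ) : Fin n → ℤ := fun j => if (j : ℕ) + 1 = k then 1 else 0

lemma unitE_single {n : ℕ} (i : Fin n) : (Pi.single i (1 : ℤ) : Fin n → ℤ) = unitE n (i + 1) := by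
  ext j
  simp only [Pi.single_apply, unitE, Fin.ext_iff]
  split_ifs <;> omega

lemma core {n : ℕ} (C : Fin n → Fin n → ℤ) (i0 : Fin n)
    (conn : ∀ S : Fin n → Prop, S i0 → (∀ i j, C i j = -1 → S i → S j) → ∀ i, S i)
    (key : ∀ (G : Type) [AddCommGroup G] (φ : (Fin n → ℤ) →+ G), φ (unitE n (i0 + 1)) = 0 →
      (∀ i, φ (C i) = 0) → ∀ k : Fin n, φ (unitE n (k + 1)) = 0)
    (O : Set (Fin n → ℤ)) (h0 : Pi.single i0 (1 : ℤ) ∈ O)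
    (hO : ∀ (i : Fin n), ∀ v ∈ O, simpleRefl C i v ∈ O) :
    AddSubgroup.closure O = ⊤ := by
  have hst : ∀ i, ∀ v ∈ AddSubgroup.closure O, simpleRefl C i v ∈ AddSubgroup.closure O := by
    intro i v hv
    induction hv using AddSubgroup.closure_induction with
    | mem x hx => exact AddSubgroup.subset_closure (hO i x hx)
    | zero => simp [simpleRefl]
    | add x y _ _ hx hy =>
      have : simpleRefl C i (x + y) = simpleRefl C i x + simpleRefl C i y := by
        simp only [simpleRefl, Pi.add_apply, add_smul]; abel
      rw [this]; exact add_mem hx hy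
    | neg x _ hx =>
      have : simpleRefl C i (-x) = - simpleRefl C i x := by
        simp only [simpleRefl, Pi.neg_apply, neg_smul]; abel
      rw [this]; exact neg_mem hx
  have hl : Pi.single i0 (1 : ℤ) ∈ AddSubgroup.closure O := AddSubgroup.subset_closure h0
  have hC : ∀ i, C i ∈ AddSubgroup.closure O := by
    apply conn
    · have := sub_mem hl (hst i0 _ hl)
      simpa [simpleRefl] using this
    · intro i j hij hi
      have := sub_mem (hst j _ hi) hi
      simpa [simpleRefl, hij] using this
  have hk := key _ (QuotientAddGroup.mk' (AddSubgroup.closure O))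
    (by rw [← unitE_single]; exact (QuotientAddGroup.eq_zero_iff _).2 hl)
    (fun i => (QuotientAddGroup.eq_zero_iff _).2 (hC i))
  rw [eq_top_iff]
  intro v _
  rw [pi_eq_sum_univ' v]
  refine sum_mem fun k _ => ?_
  have h1 := (QuotientAddGroup.eq_zero_iff _).1 (hk k)
  have : (fun j => if k = j then (1 : ℤ) else 0) = unitE n (k + 1) := by
    ext j; simp only [unitE, Fin.ext_iff]; split_ifs <;> omega
  first
  | (rw [this]; exact zsmul_mem h1 _)
  | (rw [← unitE_single] at h1
     convert zsmul_mem h1 (v k) using 2)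

lemma conn_chain (m i0 : ℕ) (hi : i0 < m) (S : ℕ → Prop) (h0 : S i0)
    (up : ∀ k, k + 1 < m → S k → S (k + 1)) (dn : ∀ k, k + 1 < m → S (k + 1) → S k) :
    ∀ k, k < m → S k := by
  have hz : ∀ j, j < m → S j → S 0 := by
    intro j
    induction j with
    | zero => exact fun _ h => h
    | succ j ih => exact fun hj h => ih (by omega) (dn j hj h)
  intro k
  induction k with
  | zero => exact fun _ => hz _ hi h0
  | succ k ih => exact fun hk => up k hk (ih (by omega))

lemma chain_mul {G : Type} [AddCommGroup G] (f : ℕ → G) (m : ℕ) (h0 : f 0 = 0)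
    (h : ∀ k, k + 1 < m → f (k + 2) = (2 : ℤ) • f (k + 1) - f k) :
    ∀ k, k ≤ m → f k = (k : ℤ) • f 1 := by
  intro k
  induction k using Nat.strong_induction_on with
  | _ k ih =>
    intro hk
    match k with
    | 0 => simp [h0]
    | 1 => simp
    | k + 2 =>
      rw [h k (by omega), ih (k + 1) (by omega) (by omega), ih k (by omega) (by omega)]
      push_cast
      module

lemma caseA (n : ℕ) (i : Fin n) (hc : Nat.Coprime ((i : ℕ) + 1) (n + 1))
    (O : Set (Fin n → ℤ)) (h0 : Pi.single i (1 : ℤ) ∈ O)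
    (hO : ∀ (j : Fin n), ∀ v ∈ O, simpleRefl (cartanA n) j v ∈ O) :
    AddSubgroup.closure O = ⊤ := by
  refine core (cartanA n) i ?_ ?_ O h0 hO
  · intro S hS hst
    have := conn_chain n i i.2 (fun k => ∀ h : k < n, S ⟨k, h⟩) (fun _ => hS)
      (fun k hk h _ => hst ⟨k, by omega⟩ _ (by simp [cartanA]) (h _))
      (fun k hk h _ => hst ⟨k + 1, by omega⟩ _ (by simp [cartanA]) (h _))
    exact fun j => this j j.2 j.2
  · intro G _ φ hi hC
    have hrow : ∀ j : Fin n, cartanA n j =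
        (2 : ℤ) • unitE n (j + 1) - unitE n j - unitE n (j + 2) := by
      intro j; ext k
      simp only [cartanA, unitE, Pi.sub_apply, Pi.smul_apply, Fin.ext_iff, smul_eq_mul]
      split_ifs <;> omega
    have hf := chain_mul (fun k => φ (unitE n k)) (n + 1)
      (by
        have : unitE n 0 = 0 := by ext; simp [unitE]
        simp [this])
      (by
        intro k hk
        have := hC ⟨k, by omega⟩
        rw [hrow] at this
        simp only [map_sub, map_zsmul] at this
        exact (sub_eq_zero.1 this).symm)
    have e1 : (((i : ℕ) + 1 : ℕ) : ℤ) • φ (unitE n 1) = 0 := by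
      rw [← hf _ (by omega)]; exact hi
    have e2 : ((n + 1 : ℕ) : ℤ) • φ (unitE n 1) = 0 := by
      rw [← hf _ (by omega)]
      have : unitE n (n + 1) = 0 := by
        ext j; have := j.2; simp [unitE]; omega
      simp [this]
    have e3 : φ (unitE n 1) = 0 := by
      have hb := Nat.gcd_eq_gcd_ab ((i : ℕ) + 1) (n + 1)
      rw [hc.gcd_eq_one] at hb
      have : φ (unitE n 1) = (((1 : ℕ) : ℤ)) • φ (unitE n 1) := by simp
      rw [this, hb, add_smul, mul_comm, mul_smul, e1, mul_comm, mul_smul, e2]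
      simp
    intro k
    have := hf (k + 1) (by omega)
    simp only [e3, smul_zero] at this
    exact this

lemma caseD (n : ℕ) (ho : Odd n) (hn : 3 ≤ n) (i : Fin n)
    (hi : (i : ℕ) = n - 2 ∨ (i : ℕ) = n - 1)
    (O : Set (Fin n → ℤ)) (h0 : Pi.single i (1 : ℤ) ∈ O)
    (hO : ∀ (j : Fin n), ∀ v ∈ O, simpleRefl (cartanD n) j v ∈ O) :
    AddSubgroup.closure O = ⊤ := by
  obtain ⟨m, rfl⟩ : ∃ m, n = m + 3 := ⟨n - 3, by omega⟩
  refine core (cartanD (m + 3)) i ?_ ?_ O h0 hO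
  · intro S hS hst
    have hm : S ⟨m, by omega⟩ := by
      refine hst i _ ?_ hS
      simp only [cartanD, Fin.ext_iff]
      split_ifs <;> omega
    have := conn_chain (m + 2) m (by omega) (fun k => ∀ h : k < m + 3, S ⟨k, h⟩) (fun _ => hm)
      (fun k hk h _ => hst ⟨k, by omega⟩ _
        (by simp only [cartanD, Fin.ext_iff]; split_ifs <;> omega) (h _))
      (fun k hk h _ => hst ⟨k + 1, by omega⟩ _
        (by simp only [cartanD, Fin.ext_iff]; split_ifs <;> omega) (h _))
    intro j
    by_cases hj : (j : ℕ) < m + 2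
    · exact this j hj j.2
    · refine hst ⟨m, by omega⟩ _ ?_ hm
      simp only [cartanD, Fin.ext_iff]
      split_ifs <;> omega
  · intro G _ φ hφ hC
    have row1 : ∀ j : Fin (m + 3), (j : ℕ) < m → cartanD (m + 3) j =
        (2 : ℤ) • unitE (m + 3) (j + 1) - unitE (m + 3) j - unitE (m + 3) (j + 2) := by
      intro j hj; ext k
      simp only [cartanD, unitE, Pi.sub_apply, Pi.smul_apply, Fin.ext_iff, smul_eq_mul]
      split_ifs <;> omega
    have row2 : cartanD (m + 3) ⟨m, by omega⟩ =
        (2 : ℤ) • unitE (m + 3) (m + 1) - unitE (m + 3) m - unitE (m + 3) (m + 2)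
          - unitE (m + 3) (m + 3) := by
      ext k
      simp only [cartanD, unitE, Pi.sub_apply, Pi.smul_apply, Fin.ext_iff, smul_eq_mul]
      split_ifs <;> omega
    have row3 : cartanD (m + 3) ⟨m + 1, by omega⟩ =
        (2 : ℤ) • unitE (m + 3) (m + 2) - unitE (m + 3) (m + 1) := by
      ext k
      simp only [cartanD, unitE, Pi.sub_apply, Pi.smul_apply, Fin.ext_iff, smul_eq_mul]
      split_ifs <;> omega
    have row4 : cartanD (m + 3) ⟨m + 2, by omega⟩ =
        (2 : ℤ) • unitE (m + 3) (m + 3) - unitE (m + 3) (m + 1) := by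
      ext k
      simp only [cartanD, unitE, Pi.sub_apply, Pi.smul_apply, Fin.ext_iff, smul_eq_mul]
      split_ifs <;> omega
    have hf := chain_mul (fun k => φ (unitE (m + 3) k)) (m + 1)
      (by
        have : unitE (m + 3) 0 = 0 := by ext; simp [unitE]
        simp [this])
      (by
        intro k hk
        have := hC ⟨k, by omega⟩
        rw [row1 _ (by simp only; omega)] at this
        simp only [map_sub, map_zsmul] at this
        exact (sub_eq_zero.1 this).symm)
    have r2 := hC ⟨m, by omega⟩
    have r3 := hC ⟨m + 1, by omega⟩
    have r4 := hC ⟨m + 2, by omega⟩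
    rw [row2] at r2
    rw [row3] at r3
    rw [row4] at r4
    simp only [map_sub, map_zsmul] at r2 r3 r4
    have f0 := hf m (by omega)
    have f1 := hf (m + 1) (by omega)

    obtain ⟨t, ht⟩ : ∃ t, m = 2 * t := by
      obtain ⟨t, ht⟩ := ho
      exact ⟨t - 1, by omega⟩
    have hm : (m : ℤ) = 2 * t := by omega
    push_cast at f1
    rw [hm] at f0 f1
    have ends : φ (unitE (m + 3) 1) = 0 ∧ φ (unitE (m + 3) (m + 2)) = 0 ∧
        φ (unitE (m + 3) (m + 3)) = 0 := by
      generalize φ (unitE (m + 3) 1) = x at *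
      generalize φ (unitE (m + 3) m) = a at *
      generalize φ (unitE (m + 3) (m + 1)) = b at *
      rcases hi with hi | hi
      · have : (i : ℕ) + 1 = m + 2 := by omega
        rw [this] at hφ
        generalize φ (unitE (m + 3) (m + 2)) = c at *
        generalize φ (unitE (m + 3) (m + 3)) = d at *
        subst hφ
        have hb : b = 0 := by simpa using r3
        subst hb
        have hd : d = x := by
          linear_combination (norm := module) -r2 + f1 - f0
        have hx2 : (2 : ℤ) • x = 0 := by rw [← hd]; simpa using r4
        have hx : x = 0 := by linear_combination (norm := module) -f1 - (t : ℤ) • hx2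
        exact ⟨hx, rfl, hd.trans hx⟩
      · have : (i : ℕ) + 1 = m + 3 := by omega
        rw [this] at hφ
        generalize φ (unitE (m + 3) (m + 2)) = c at *
        generalize φ (unitE (m + 3) (m + 3)) = d at *
        subst hφ
        have hb : b = 0 := by simpa using r4
        subst hb
        have hd : c = x := by
          linear_combination (norm := module) -r2 + f1 - f0
        have hx2 : (2 : ℤ) • x = 0 := by rw [← hd]; simpa using r3
        have hx : x = 0 := by linear_combination (norm := module) -f1 - (t : ℤ) • hx2
        exact ⟨hx, hd.trans hx, rfl⟩
    intro k
    rcases lt_trichotomy (k : ℕ) (m + 1) with hk | hk | hk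
    · have := hf (k + 1) (by omega)
      simp only [ends.1, smul_zero] at this
      exact this
    · rw [hk]; exact ends.2.1
    · have : (k : ℕ) + 1 = m + 3 := by omega
      rw [this]; exact ends.2.2

lemma caseE8 (O : Set (Fin 8 → ℤ)) (h0 : Pi.single (7 : Fin 8) (1 : ℤ) ∈ O)
    (hO : ∀ (j : Fin 8), ∀ v ∈ O, simpleRefl (cartanE 8) j v ∈ O) :
    AddSubgroup.closure O = ⊤ := by
  refine core (cartanE 8) 7 ?_ ?_ O h0 hO
  · intro S h7 hst
    have h6 := hst 7 6 (by decide) h7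
    have h5 := hst 6 5 (by decide) h6
    have h4 := hst 5 4 (by decide) h5
    have h3 := hst 4 3 (by decide) h4
    have h2 := hst 3 2 (by decide) h3
    have h1 := hst 3 1 (by decide) h3
    have h0 := hst 2 0 (by decide) h2
    intro i; fin_cases i <;> assumption
  · intro G _ φ e8 hC
    have r0 := hC 0
    have r1 := hC 1
    have r2 := hC 2
    have r3 := hC 3
    have r4 := hC 4
    have r5 := hC 5
    have r6 := hC 6
    have r7 := hC 7
    rw [show cartanE 8 0 = (2 : ℤ) • unitE 8 1 - unitE 8 3 by decide] at r0
    rw [show cartanE 8 1 = (2 : ℤ) • unitE 8 2 - unitE 8 4 by decide] at r1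
    rw [show cartanE 8 2 = (2 : ℤ) • unitE 8 3 - unitE 8 1 - unitE 8 4 by decide] at r2
    rw [show cartanE 8 3 = (2 : ℤ) • unitE 8 4 - unitE 8 2 - unitE 8 3 - unitE 8 5 by decide] at r3
    rw [show cartanE 8 4 = (2 : ℤ) • unitE 8 5 - unitE 8 4 - unitE 8 6 by decide] at r4
    rw [show cartanE 8 5 = (2 : ℤ) • unitE 8 6 - unitE 8 5 - unitE 8 7 by decide] at r5
    rw [show cartanE 8 6 = (2 : ℤ) • unitE 8 7 - unitE 8 6 - unitE 8 8 by decide] at r6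
    rw [show cartanE 8 7 = (2 : ℤ) • unitE 8 8 - unitE 8 7 by decide] at r7
    simp only [map_sub, map_zsmul] at r0 r1 r2 r3 r4 r5 r6 r7
    replace e8 : φ (unitE 8 8) = 0 := e8
    have e7 : φ (unitE 8 7) = 0 := by simpa [e8] using r7
    have e6 : φ (unitE 8 6) = 0 := by simpa [e8, e7] using r6
    have e5 : φ (unitE 8 5) = 0 := by simpa [e7, e6] using r5
    have e4 : φ (unitE 8 4) = 0 := by simpa [e6, e5] using r4
    have e1 : φ (unitE 8 1) = 0 := by
      linear_combination (norm := module) (-2 : ℤ) • r3 - r2 - r1 + (2 : ℤ) • e4 - (2 : ℤ) • e5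
    have e3 : φ (unitE 8 3) = 0 := by simpa [e1] using r0
    have e2 : φ (unitE 8 2) = 0 := by simpa [e3, e4, e5] using r3
    intro k; fin_cases k <;> assumption

lemma caseE7 (O : Set (Fin 7 → ℤ)) (h0 : Pi.single (6 : Fin 7) (1 : ℤ) ∈ O)
    (hO : ∀ (j : Fin 7), ∀ v ∈ O, simpleRefl (cartanE 7) j v ∈ O) :
    AddSubgroup.closure O = ⊤ := by
  refine core (cartanE 7) 6 ?_ ?_ O h0 hO
  · intro S h6 hst
    have h5 := hst 6 5 (by decide) h6
    have h4 := hst 5 4 (by decide) h5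
    have h3 := hst 4 3 (by decide) h4
    have h2 := hst 3 2 (by decide) h3
    have h1 := hst 3 1 (by decide) h3
    have h0 := hst 2 0 (by decide) h2
    intro i; fin_cases i <;> assumption
  · intro G _ φ e7 hC
    have r0 := hC 0
    rw [show cartanE 7 0 = (2 : ℤ) • unitE 7 1 - unitE 7 3 by decide] at r0
    have r1 := hC 1
    rw [show cartanE 7 1 = (2 : ℤ) • unitE 7 2 - unitE 7 4 by decide] at r1
    have r2 := hC 2
    rw [show cartanE 7 2 = (2 : ℤ) • unitE 7 3 - unitE 7 1 - unitE 7 4 by decide] at r2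
    have r3 := hC 3
    rw [show cartanE 7 3 = (2 : ℤ) • unitE 7 4 - unitE 7 2 - unitE 7 3 - unitE 7 5 by decide] at r3
    have r4 := hC 4
    rw [show cartanE 7 4 = (2 : ℤ) • unitE 7 5 - unitE 7 4 - unitE 7 6 by decide] at r4
    have r5 := hC 5
    rw [show cartanE 7 5 = (2 : ℤ) • unitE 7 6 - unitE 7 5 - unitE 7 7 by decide] at r5
    have r6 := hC 6
    rw [show cartanE 7 6 = (2 : ℤ) • unitE 7 7 - unitE 7 6 by decide] at r6
    simp only [map_sub, map_zsmul] at r0 r1 r2 r3 r4 r5 r6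
    replace e7 : φ (unitE 7 7) = 0 := e7
    have e6 : φ (unitE 7 6) = 0 := by simpa [e7] using r6
    have e5 : φ (unitE 7 5) = 0 := by simpa [e7, e6] using r5
    have e4 : φ (unitE 7 4) = 0 := by simpa [e6, e5] using r4
    have e1 : φ (unitE 7 1) = 0 := by
      linear_combination (norm := module) (-2 : ℤ) • r3 - r2 - r1 + (2 : ℤ) • e4 - (2 : ℤ) • e5
    have e3 : φ (unitE 7 3) = 0 := by simpa [e1] using r0
    have e2 : φ (unitE 7 2) = 0 := by simpa [e3, e4, e5] using r3
    intro k; fin_cases k <;> assumption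

lemma caseE6b (O : Set (Fin 6 → ℤ)) (h0 : Pi.single (5 : Fin 6) (1 : ℤ) ∈ O)
    (hO : ∀ (j : Fin 6), ∀ v ∈ O, simpleRefl (cartanE 6) j v ∈ O) :
    AddSubgroup.closure O = ⊤ := by
  refine core (cartanE 6) 5 ?_ ?_ O h0 hO
  · intro S h5 hst
    have h4 := hst 5 4 (by decide) h5
    have h3 := hst 4 3 (by decide) h4
    have h2 := hst 3 2 (by decide) h3
    have h1 := hst 3 1 (by decide) h3
    have h0 := hst 2 0 (by decide) h2
    intro i; fin_cases i <;> assumption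
  · intro G _ φ e6 hC
    have r0 := hC 0
    rw [show cartanE 6 0 = (2 : ℤ) • unitE 6 1 - unitE 6 3 by decide] at r0
    have r1 := hC 1
    rw [show cartanE 6 1 = (2 : ℤ) • unitE 6 2 - unitE 6 4 by decide] at r1
    have r2 := hC 2
    rw [show cartanE 6 2 = (2 : ℤ) • unitE 6 3 - unitE 6 1 - unitE 6 4 by decide] at r2
    have r3 := hC 3
    rw [show cartanE 6 3 = (2 : ℤ) • unitE 6 4 - unitE 6 2 - unitE 6 3 - unitE 6 5 by decide] at r3
    have r4 := hC 4
    rw [show cartanE 6 4 = (2 : ℤ) • unitE 6 5 - unitE 6 4 - unitE 6 6 by decide] at r4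
    have r5 := hC 5
    rw [show cartanE 6 5 = (2 : ℤ) • unitE 6 6 - unitE 6 5 by decide] at r5
    simp only [map_sub, map_zsmul] at r0 r1 r2 r3 r4 r5
    replace e6 : φ (unitE 6 6) = 0 := e6
    have e5 : φ (unitE 6 5) = 0 := by simpa [e6] using r5
    have e4 : φ (unitE 6 4) = 0 := by simpa [e6, e5] using r4
    have e1 : φ (unitE 6 1) = 0 := by
      linear_combination (norm := module) (-2 : ℤ) • r3 - r2 - r1 + (2 : ℤ) • e4 - (2 : ℤ) • e5
    have e3 : φ (unitE 6 3) = 0 := by simpa [e1] using r0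
    have e2 : φ (unitE 6 2) = 0 := by simpa [e3, e4, e5] using r3
    intro k; fin_cases k <;> assumption

lemma caseE6a (O : Set (Fin 6 → ℤ)) (h0 : Pi.single (0 : Fin 6) (1 : ℤ) ∈ O)
    (hO : ∀ (j : Fin 6), ∀ v ∈ O, simpleRefl (cartanE 6) j v ∈ O) :
    AddSubgroup.closure O = ⊤ := by
  refine core (cartanE 6) 0 ?_ ?_ O h0 hO
  · intro S h0 hst
    have h2 := hst 0 2 (by decide) h0
    have h3 := hst 2 3 (by decide) h2
    have h4 := hst 3 4 (by decide) h3
    have h1 := hst 3 1 (by decide) h3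
    have h5 := hst 4 5 (by decide) h4
    intro i; fin_cases i <;> assumption
  · intro G _ φ e1 hC
    have r0 := hC 0
    rw [show cartanE 6 0 = (2 : ℤ) • unitE 6 1 - unitE 6 3 by decide] at r0
    have r1 := hC 1
    rw [show cartanE 6 1 = (2 : ℤ) • unitE 6 2 - unitE 6 4 by decide] at r1
    have r2 := hC 2
    rw [show cartanE 6 2 = (2 : ℤ) • unitE 6 3 - unitE 6 1 - unitE 6 4 by decide] at r2
    have r3 := hC 3
    rw [show cartanE 6 3 = (2 : ℤ) • unitE 6 4 - unitE 6 2 - unitE 6 3 - unitE 6 5 by decide] at r3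
    have r4 := hC 4
    rw [show cartanE 6 4 = (2 : ℤ) • unitE 6 5 - unitE 6 4 - unitE 6 6 by decide] at r4
    have r5 := hC 5
    rw [show cartanE 6 5 = (2 : ℤ) • unitE 6 6 - unitE 6 5 by decide] at r5
    simp only [map_sub, map_zsmul] at r0 r1 r2 r3 r4 r5
    replace e1 : φ (unitE 6 1) = 0 := e1
    have e3 : φ (unitE 6 3) = 0 := by simpa [e1] using r0
    have e4 : φ (unitE 6 4) = 0 := by simpa [e1, e3] using r2
    have e6 : φ (unitE 6 6) = 0 := by
      linear_combination (norm := module) (-2 : ℤ) • r3 - r4 - r1 - (2 : ℤ) • e3 + (2 : ℤ) • e4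
    have e5 : φ (unitE 6 5) = 0 := by simpa [e6] using r5
    have e2 : φ (unitE 6 2) = 0 := by simpa [e3, e4, e5] using r3
    intro k; fin_cases k <;> assumption

theorem stmt_17 :
    -- (1) W(E₈), λ = ϖ₈
    (∀ O : Set (Fin 8 → ℤ), Pi.single (7 : Fin 8) (1 : ℤ) ∈ O →
      (∀ (i : Fin 8), ∀ v ∈ O, simpleRefl (cartanE 8) i v ∈ O) →
      AddSubgroup.closure O = ⊤) ∧
    -- (2) W(E₇), λ = ϖ₇
    (∀ O : Set (Fin 7 → ℤ), Pi.single (6 : Fin 7) (1 : ℤ) ∈ O →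
      (∀ (i : Fin 7), ∀ v ∈ O, simpleRefl (cartanE 7) i v ∈ O) →
      AddSubgroup.closure O = ⊤) ∧
    -- (3) W(E₆), λ = ϖ₁ or λ = ϖ₆
    (∀ lam : Fin 6 → ℤ,
      (lam = Pi.single (0 : Fin 6) (1 : ℤ) ∨ lam = Pi.single (5 : Fin 6) (1 : ℤ)) →
      ∀ O : Set (Fin 6 → ℤ), lam ∈ O →
      (∀ (i : Fin 6), ∀ v ∈ O, simpleRefl (cartanE 6) i v ∈ O) →
      AddSubgroup.closure O = ⊤) ∧
    -- (4) W(D_n), n odd, λ = ϖ_{n−1} or λ = ϖ_n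
    (∀ n : ℕ, Odd n → ∀ hn : 3 ≤ n,
      ∀ lam : Fin n → ℤ,
      (lam = Pi.single (⟨n - 2, by omega⟩ : Fin n) (1 : ℤ) ∨
        lam = Pi.single (⟨n - 1, by omega⟩ : Fin n) (1 : ℤ)) →
      ∀ O : Set (Fin n → ℤ), lam ∈ O →
      (∀ (i : Fin n), ∀ v ∈ O, simpleRefl (cartanD n) i v ∈ O) →
      AddSubgroup.closure O = ⊤) ∧
    -- (5) W(A_n), λ = ϖ_i with i coprime to n+1
    (∀ (n : ℕ) (i : Fin n), Nat.Coprime ((i : ℕ) + 1) (n + 1) →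
      ∀ O : Set (Fin n → ℤ), Pi.single i (1 : ℤ) ∈ O →
      (∀ (j : Fin n), ∀ v ∈ O, simpleRefl (cartanA n) j v ∈ O) →
      AddSubgroup.closure O = ⊤) := by
  refine ⟨caseE8, caseE7, ?_, ?_, caseA⟩
  · rintro lam (rfl | rfl) O h0 hO
    · exact caseE6a O h0 hO
    · exact caseE6b O h0 hO
  · rintro n ho hn lam (rfl | rfl) O h0 hO
    · exact caseD n ho hn _ (Or.inl rfl) O h0 hO
    · exact caseD n ho hn _ (Or.inr rfl) O h0 hO
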